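/- The number of pairs (A,B) ∈ ℤ² with |A| ≤ X^{1/3}, |B| ≤ X^{1/2}, 4A³ + 27B² ≠ 0, and such that for every prime q, q⁴ | A implies q⁶ ∤ B, equals (4/ζ(10)) X^{5/6} + O(X^{1/2}) as X → ∞ (Brumer's lemma). -/

import Mathlib

open Asymptotics Filter

/-- The number of minimal Weierstrass equations `y² = x³ + Ax + B` of height at most `X`. -/
noncomputable def minimalWeierstrassCount (X : ℝ) : ℕ :=
  Nat.card {AB : ℤ × ℤ // |(AB.1 : ℝ)| ≤ X ^ ((1 : ℝ)/3) ∧ |(AB.2 : ℝ)| ≤ X ^ ((1 : ℝ)/2) ∧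
    4 * AB.1 ^ 3 + 27 * AB.2 ^ 2 ≠ 0 ∧
    ∀ q : ℕ, q.Prime → (q : ℤ) ^ 4 ∣ AB.1 → ¬ (q : ℤ) ^ 6 ∣ AB.2}


lemma multiples_card (a : ℝ) (ha : 0 ≤ a) (k : ℕ) (hk : 0 < k) :
    (((Finset.Icc (-⌊a⌋) ⌊a⌋).filter (fun A : ℤ => (k : ℤ) ∣ A)).card : ℝ)
      = 2 * (⌊a / k⌋ : ℝ) + 1 := by
  have hk' : (0 : ℝ) < k := by exact_mod_cast hk
  have hm : 0 ≤ ⌊a / k⌋ := Int.floor_nonneg.2 (by positivity)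
  have h : (Finset.Icc (-⌊a⌋) ⌊a⌋).filter (fun A : ℤ => (k : ℤ) ∣ A)
      = (Finset.Icc (-⌊a / k⌋) ⌊a / k⌋).image (fun j => (k : ℤ) * j) := by
    ext A
    simp only [Finset.mem_filter, Finset.mem_Icc, Finset.mem_image]
    constructor
    · rintro ⟨⟨h1, h2⟩, j, rfl⟩
      refine ⟨j, ⟨?_, ?_⟩, rfl⟩
      · have : -j ≤ ⌊a / k⌋ := by
          rw [Int.le_floor, le_div_iff₀ hk']
          have := Int.le_floor.1 (show -((k : ℤ) * j) ≤ ⌊a⌋ by linarith)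
          push_cast at this ⊢
          linarith
        linarith
      · rw [Int.le_floor, le_div_iff₀ hk']
        have := Int.le_floor.1 h2
        push_cast at this ⊢
        linarith
    · rintro ⟨j, ⟨h1, h2⟩, rfl⟩
      refine ⟨⟨?_, ?_⟩, dvd_mul_right _ _⟩
      · have : -((k : ℤ) * j) ≤ ⌊a⌋ := by
          have := Int.le_floor.1 (show -j ≤ ⌊a / k⌋ by linarith)
          rw [le_div_iff₀ hk'] at this
          rw [Int.le_floor]
          push_cast at this ⊢
          linarith
        linarith
      · rw [Int.le_floor, le_div_iff₀ hk'] at h2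
        rw [Int.le_floor]
        push_cast at h2 ⊢
        linarith
  rw [h, Finset.card_image_of_injective, Int.card_Icc]
  · have : ((⌊a / k⌋ + 1 - -⌊a / k⌋).toNat : ℤ) = 2 * ⌊a / k⌋ + 1 := by omega
    exact_mod_cast this
  · intro x y hxy
    have : (k : ℤ) ≠ 0 := by positivity
    exact mul_left_cancel₀ this hxy

lemma lcm_pow_dvd (d e k : ℕ) (A : ℤ) (h1 : (d : ℤ) ^ k ∣ A) (h2 : (e : ℤ) ^ k ∣ A) :
    ((Nat.lcm d e : ℕ) : ℤ) ^ k ∣ A := by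
  rw [← Int.natCast_pow, Int.natCast_dvd] at *
  rw [← Nat.pow_lcm_pow]
  exact Nat.lcm_dvd h1 h2

lemma le_of_pow_dvd (d k K : ℕ) (hk : k ≠ 0) (A : ℤ) (hA : A ≠ 0) (hK : A.natAbs ≤ K)
    (h : (d : ℤ) ^ k ∣ A) : d ≤ K := by
  rw [← Int.natCast_pow, Int.natCast_dvd] at h
  exact (Nat.le_self_pow hk d).trans ((Nat.le_of_dvd (Int.natAbs_pos.2 hA) h).trans hK)

open Classical in
lemma moebius_minimal (A B : ℤ) (hAB : ¬ (A = 0 ∧ B = 0)) (K : ℕ) (hA : A.natAbs ≤ K)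
    (hB : B.natAbs ≤ K) :
    ∑ d ∈ (Finset.Icc 1 K).filter (fun d : ℕ => (d : ℤ) ^ 4 ∣ A ∧ (d : ℤ) ^ 6 ∣ B),
      ArithmeticFunction.moebius d
    = if (∀ q : ℕ, q.Prime → (q : ℤ) ^ 4 ∣ A → ¬ (q : ℤ) ^ 6 ∣ B) then 1 else 0 := by
  set S := (Finset.Icc 1 K).filter (fun d : ℕ => (d : ℤ) ^ 4 ∣ A ∧ (d : ℤ) ^ 6 ∣ B) with hS
  have hle : ∀ d : ℕ, (d : ℤ) ^ 4 ∣ A → (d : ℤ) ^ 6 ∣ B → d ≤ K := by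
    intro d h1 h2
    by_cases h : A = 0
    · exact le_of_pow_dvd d 6 K (by norm_num) B (fun h' => hAB ⟨h, h'⟩) hB h2
    · exact le_of_pow_dvd d 4 K (by norm_num) A h hA h1
  have hmem : ∀ d : ℕ, d ∈ S ↔ 0 < d ∧ (d : ℤ) ^ 4 ∣ A ∧ (d : ℤ) ^ 6 ∣ B := by
    intro d
    rw [hS, Finset.mem_filter, Finset.mem_Icc]
    constructor
    · rintro ⟨⟨h1, -⟩, h2⟩; exact ⟨h1, h2⟩
    · rintro ⟨h1, h2⟩; exact ⟨⟨h1, hle d h2.1 h2.2⟩, h2⟩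
  have h1S : 1 ∈ S := by rw [hmem]; simp
  obtain ⟨D, hD, hmax⟩ := S.exists_max_image id ⟨1, h1S⟩
  have hD' := (hmem D).1 hD
  have hdiv : S = D.divisors := by
    ext e
    rw [Nat.mem_divisors]
    constructor
    · intro he
      have he' := (hmem e).1 he
      have hl : Nat.lcm D e ∈ S := by
        rw [hmem]
        exact ⟨Nat.lcm_pos hD'.1 he'.1, lcm_pow_dvd _ _ _ _ hD'.2.1 he'.2.1,
          lcm_pow_dvd _ _ _ _ hD'.2.2 he'.2.2⟩
      have h1 : Nat.lcm D e ≤ D := hmax _ hl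
      have h2 : Nat.lcm D e = D := le_antisymm h1 (Nat.le_of_dvd (Nat.lcm_pos hD'.1 he'.1)
        (Nat.dvd_lcm_left _ _))
      exact ⟨h2 ▸ Nat.dvd_lcm_right D e, hD'.1.ne'⟩
    · rintro ⟨he, h0⟩
      rw [hmem]
      have : (e : ℤ) ∣ D := by exact_mod_cast he
      exact ⟨Nat.pos_of_dvd_of_pos he hD'.1, (pow_dvd_pow_of_dvd this 4).trans hD'.2.1,
        (pow_dvd_pow_of_dvd this 6).trans hD'.2.2⟩
  have key : ∑ d ∈ D.divisors, ArithmeticFunction.moebius d = if D = 1 then 1 else 0 := by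
    rw [← ArithmeticFunction.coe_zeta_mul_apply, ArithmeticFunction.coe_zeta_mul_moebius,
      ArithmeticFunction.one_apply]
  rw [hdiv, key]
  congr 1
  rw [eq_iff_iff]
  constructor
  · rintro rfl q hq h1 h2
    have : q ∈ S := (hmem q).2 ⟨hq.pos, h1, h2⟩
    have : q ≤ 1 := hmax q this
    exact absurd hq.two_le (by omega)
  · intro h
    by_contra hne
    obtain ⟨q, hq, hqD⟩ := Nat.exists_prime_and_dvd hne
    have : q ∈ S := by rw [hdiv, Nat.mem_divisors]; exact ⟨hqD, hD'.1.ne'⟩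
    have := (hmem q).1 this
    exact h q hq this.2.1 this.2.2

lemma hasSum_moebius : ∃ c : ℝ, HasSum (fun n : ℕ => (ArithmeticFunction.moebius n : ℝ) / (n : ℝ) ^ 10) c
    ∧ c = 1 / (∑' n : ℕ, (1 : ℝ) / (n + 1) ^ 10) := by
  have h10 : (1 : ℝ) < (10 : ℂ).re := by norm_num
  have hs : Summable (fun n : ℕ => (ArithmeticFunction.moebius n : ℝ) / (n : ℝ) ^ 10) := by
    refine Summable.of_norm_bounded (Real.summable_one_div_nat_pow.2 (by norm_num : 1 < 10)) ?_
    intro n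
    rw [norm_div, norm_pow, RCLike.norm_natCast]
    gcongr
    have := ArithmeticFunction.abs_moebius_le_one (n := n)
    rw [Real.norm_eq_abs]
    exact_mod_cast this
  refine ⟨_, hs.hasSum, ?_⟩
  have hz : riemannZeta 10 = ((∑' n : ℕ, (1 : ℝ) / (n + 1) ^ 10 : ℝ) : ℂ) := by
    have := zeta_eq_tsum_one_div_nat_add_one_cpow h10
    rw [this]
    push_cast
    refine tsum_congr fun n => ?_
    congr 1
    exact_mod_cast Complex.cpow_natCast ((n : ℂ) + 1) 10
  have hm : LSeries (fun n => ((ArithmeticFunction.moebius n : ℤ) : ℂ)) 10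
      = ((∑' n : ℕ, (ArithmeticFunction.moebius n : ℝ) / (n : ℝ) ^ 10 : ℝ) : ℂ) := by
    rw [LSeries]
    push_cast
    refine tsum_congr fun n => ?_
    rcases eq_or_ne n 0 with rfl | hn
    · simp
    · rw [LSeries.term_of_ne_zero hn]
      congr 1
      exact_mod_cast Complex.cpow_natCast (n : ℂ) 10
  have h := ArithmeticFunction.LSeries_zeta_mul_Lseries_moebius h10
  rw [ArithmeticFunction.LSeries_zeta_eq_riemannZeta h10, hz, hm] at h
  have h' : (∑' n : ℕ, (1 : ℝ) / (n + 1) ^ 10) *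
      (∑' n : ℕ, (ArithmeticFunction.moebius n : ℝ) / (n : ℝ) ^ 10) = 1 := by
    exact_mod_cast h
  exact eq_one_div_of_mul_eq_one_right h'

lemma local_bound (u v : ℝ) (hu : 0 ≤ u) (hv : 0 ≤ v) (huv : (u < 1 ∧ v < 1) ∨ (1 ≤ v ∧ u ≤ v)) :
    |((2 * (⌊u⌋ : ℝ) + 1) * (2 * (⌊v⌋ : ℝ) + 1) - 1) - 4 * (u * v)| ≤ 6 * v := by
  rcases huv with ⟨h1, h2⟩ | ⟨h1, h2⟩
  · rw [Int.floor_eq_zero_iff.2 ⟨hu, h1⟩, Int.floor_eq_zero_iff.2 ⟨hv, h2⟩]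
    rw [abs_le]
    constructor <;> norm_num <;> nlinarith
  · have a1 := Int.floor_le u
    have a2 := Int.lt_floor_add_one u
    have b1 := Int.floor_le v
    have b2 := Int.lt_floor_add_one v
    obtain ⟨s, hs⟩ : ∃ s : ℝ, s = 2 * (⌊u⌋ : ℝ) + 1 - 2 * u := ⟨_, rfl⟩
    obtain ⟨t, ht⟩ : ∃ t : ℝ, t = 2 * (⌊v⌋ : ℝ) + 1 - 2 * v := ⟨_, rfl⟩
    have hs' : |s| ≤ 1 := by rw [abs_le]; constructor <;> linarith
    have ht' : |t| ≤ 1 := by rw [abs_le]; constructor <;> linarith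
    have e : ((2 * (⌊u⌋ : ℝ) + 1) * (2 * (⌊v⌋ : ℝ) + 1) - 1) - 4 * (u * v)
        = 2 * u * t + 2 * v * s + (s * t - 1) := by rw [hs, ht]; ring
    have e1 : |2 * u * t| ≤ 2 * u := by
      rw [abs_mul, abs_of_nonneg (by positivity)]; nlinarith
    have e2 : |2 * v * s| ≤ 2 * v := by
      rw [abs_mul, abs_of_nonneg (by positivity)]; nlinarith
    have e3 : |s * t| ≤ 1 := by
      rw [abs_mul]; nlinarith [abs_nonneg s, abs_nonneg t]
    rw [e]
    rw [abs_le] at *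
    constructor <;> linarith

/-- The box of integer pairs with `|A| ≤ a`, `|B| ≤ b`. -/
noncomputable def brumerBox (a b : ℝ) : Finset (ℤ × ℤ) :=
  Finset.Icc (-⌊a⌋) ⌊a⌋ ×ˢ Finset.Icc (-⌊b⌋) ⌊b⌋

/-- Minimality of the pair `(A, B)`. -/
def BrumerMin (p : ℤ × ℤ) : Prop :=
  ∀ q : ℕ, q.Prime → (q : ℤ) ^ 4 ∣ p.1 → ¬ (q : ℤ) ^ 6 ∣ p.2

lemma mem_Icc_floor (a : ℝ) (A : ℤ) : A ∈ Finset.Icc (-⌊a⌋) ⌊a⌋ ↔ |(A : ℝ)| ≤ a := by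
  rw [Finset.mem_Icc, ← abs_le, Int.le_floor, Int.cast_abs]

lemma mem_brumerBox (a b : ℝ) (p : ℤ × ℤ) :
    p ∈ brumerBox a b ↔ |(p.1 : ℝ)| ≤ a ∧ |(p.2 : ℝ)| ≤ b := by
  rw [brumerBox, Finset.mem_product, mem_Icc_floor, mem_Icc_floor]

lemma box_dvd_card (a b : ℝ) (ha : 0 ≤ a) (hb : 0 ≤ b) (d : ℕ) (hd : 0 < d) :
    ((((brumerBox a b).erase (0, 0)).filter
      (fun p : ℤ × ℤ => (d : ℤ) ^ 4 ∣ p.1 ∧ (d : ℤ) ^ 6 ∣ p.2)).card : ℝ)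
    = (2 * (⌊a / (d : ℝ) ^ 4⌋ : ℝ) + 1) * (2 * (⌊b / (d : ℝ) ^ 6⌋ : ℝ) + 1) - 1 := by
  have h1 := multiples_card a ha (d ^ 4) (by positivity)
  have h2 := multiples_card b hb (d ^ 6) (by positivity)
  push_cast at h1 h2
  rw [Finset.filter_erase, Finset.card_erase_of_mem, Nat.cast_sub, brumerBox,
    Finset.filter_product, Finset.card_product, Nat.cast_mul, h1, h2, Nat.cast_one]
  · rw [Nat.one_le_iff_ne_zero, ← Nat.pos_iff_ne_zero, Finset.card_pos]
    exact ⟨(0, 0), by simp [mem_brumerBox, ha, hb]⟩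
  · simp [mem_brumerBox, ha, hb]

open Classical in
lemma min_count (a b : ℝ) (ha : 0 ≤ a) (hb : 0 ≤ b) :
    HasSum (fun d : ℕ => (ArithmeticFunction.moebius d : ℝ) *
      ((2 * (⌊a / (d : ℝ) ^ 4⌋ : ℝ) + 1) * (2 * (⌊b / (d : ℝ) ^ 6⌋ : ℝ) + 1) - 1))
      (((brumerBox a b).filter BrumerMin).card : ℝ) := by
  set K : ℕ := max ⌊a⌋₊ ⌊b⌋₊ with hK
  have hz : (brumerBox a b).filter BrumerMin
      = ((brumerBox a b).erase (0, 0)).filter BrumerMin := by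
    rw [Finset.filter_erase, Finset.erase_eq_of_notMem]
    intro h
    exact (Finset.mem_filter.1 h).2 2 Nat.prime_two (dvd_zero _) (dvd_zero _)
  have key : (((brumerBox a b).filter BrumerMin).card : ℤ)
      = ∑ d ∈ Finset.Icc 1 K, ArithmeticFunction.moebius d *
        ((((brumerBox a b).erase (0, 0)).filter
          (fun p : ℤ × ℤ => (d : ℤ) ^ 4 ∣ p.1 ∧ (d : ℤ) ^ 6 ∣ p.2)).card : ℤ) := by
    rw [hz, Finset.card_filter]
    push_cast
    have : ∀ p ∈ (brumerBox a b).erase (0, 0), (if BrumerMin p then (1 : ℤ) else 0)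
        = ∑ d ∈ Finset.Icc 1 K, if ((d : ℤ) ^ 4 ∣ p.1 ∧ (d : ℤ) ^ 6 ∣ p.2) then
          ArithmeticFunction.moebius d else 0 := by
      intro p hp
      rw [Finset.mem_erase, mem_brumerBox] at hp
      obtain ⟨hp0, hpa, hpb⟩ := hp
      rw [← Finset.sum_filter, moebius_minimal p.1 p.2]
      · rfl
      · rintro ⟨h1, h2⟩; exact hp0 (Prod.ext h1 h2)
      · refine le_trans ?_ (le_max_left _ _)
        apply Nat.le_floor
        rwa [Nat.cast_natAbs, Int.cast_abs]
      · refine le_trans ?_ (le_max_right _ _)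
        apply Nat.le_floor
        rwa [Nat.cast_natAbs, Int.cast_abs]
    rw [Finset.sum_congr rfl this, Finset.sum_comm]
    refine Finset.sum_congr rfl fun d _ => ?_
    rw [← Finset.sum_filter, Finset.sum_const, nsmul_eq_mul, mul_comm]
  have key' : (((brumerBox a b).filter BrumerMin).card : ℝ)
      = ∑ d ∈ Finset.Icc 1 K, (ArithmeticFunction.moebius d : ℝ) *
      ((2 * (⌊a / (d : ℝ) ^ 4⌋ : ℝ) + 1) * (2 * (⌊b / (d : ℝ) ^ 6⌋ : ℝ) + 1) - 1) := by
    have := congrArg (Int.cast : ℤ → ℝ) key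
    push_cast at this
    rw [this]
    refine Finset.sum_congr rfl fun d hd => ?_
    rw [box_dvd_card a b ha hb d (Finset.mem_Icc.1 hd).1]
  rw [key']
  apply hasSum_sum_of_ne_finset_zero
  intro d hd
  rcases Nat.eq_zero_or_pos d with rfl | h0
  · simp
  have hdK : K < d := by
    by_contra h
    exact hd (Finset.mem_Icc.2 ⟨h0, not_lt.1 h⟩)
  have h1 : a < d := (Nat.floor_lt ha).1 (lt_of_le_of_lt (le_max_left _ _) hdK)
  have h2 : b < d := (Nat.floor_lt hb).1 (lt_of_le_of_lt (le_max_right _ _) hdK)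
  have hd1 : (1 : ℝ) ≤ d := by exact_mod_cast h0
  have f1 : ⌊a / (d : ℝ) ^ 4⌋ = 0 := by
    rw [Int.floor_eq_zero_iff]
    refine ⟨by positivity, ?_⟩
    rw [div_lt_one (by positivity)]
    exact h1.trans_le (le_self_pow₀ hd1 (by norm_num))
  have f2 : ⌊b / (d : ℝ) ^ 6⌋ = 0 := by
    rw [Int.floor_eq_zero_iff]
    refine ⟨by positivity, ?_⟩
    rw [div_lt_one (by positivity)]
    exact h2.trans_le (le_self_pow₀ hd1 (by norm_num))
  rw [f1, f2]
  simp

open Classical in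
lemma min_count_bound (x : ℝ) (hx : 0 ≤ x) :
    |(((brumerBox (x ^ 4) (x ^ 6)).filter BrumerMin).card : ℝ)
      - 4 / (∑' n : ℕ, (1 : ℝ) / (n + 1) ^ 10) * x ^ 10|
      ≤ 6 * (∑' n : ℕ, (1 : ℝ) / (n : ℝ) ^ 6) * x ^ 6 := by
  obtain ⟨c, hc, hc'⟩ := hasSum_moebius
  have h1 := (min_count (x ^ 4) (x ^ 6) (by positivity) (by positivity)).sub
    (hc.mul_left (4 * x ^ 10))
  have h2 : HasSum (fun n : ℕ => 6 * x ^ 6 * ((1 : ℝ) / (n : ℝ) ^ 6))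
      (6 * x ^ 6 * (∑' n : ℕ, (1 : ℝ) / (n : ℝ) ^ 6)) :=
    (Real.summable_one_div_nat_pow.2 (by norm_num : 1 < 6)).hasSum.mul_left _
  have h3 := h1.norm_le_of_bounded h2 (fun d => by
    rcases Nat.eq_zero_or_pos d with rfl | h0
    · simp
    have hd : (0 : ℝ) < d := by exact_mod_cast h0
    have hl := local_bound (x ^ 4 / (d : ℝ) ^ 4) (x ^ 6 / (d : ℝ) ^ 6) (by positivity)
      (by positivity) (by
        rw [← div_pow, ← div_pow]
        have ht : 0 ≤ x / d := by positivity
        rcases lt_or_ge (x / d) 1 with h | h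
        · exact Or.inl ⟨pow_lt_one₀ ht h (by norm_num), pow_lt_one₀ ht h (by norm_num)⟩
        · exact Or.inr ⟨one_le_pow₀ h, pow_le_pow_right₀ h (by norm_num)⟩)
    have hmu : |(ArithmeticFunction.moebius d : ℝ)| ≤ 1 := by
      exact_mod_cast ArithmeticFunction.abs_moebius_le_one (n := d)
    have e : 4 * x ^ 10 * ((ArithmeticFunction.moebius d : ℝ) / (d : ℝ) ^ 10)
        = (ArithmeticFunction.moebius d : ℝ) * (4 * (x ^ 4 / (d : ℝ) ^ 4 * (x ^ 6 / (d : ℝ) ^ 6))) := by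
      field_simp
    rw [e, ← mul_sub, Real.norm_eq_abs, abs_mul]
    calc _ ≤ 1 * (6 * (x ^ 6 / (d : ℝ) ^ 6)) := by gcongr
      _ = _ := by ring)
  rw [Real.norm_eq_abs] at h3
  have e : 4 / (∑' n : ℕ, (1 : ℝ) / (n + 1) ^ 10) * x ^ 10 = 4 * x ^ 10 * c := by rw [hc']; ring
  rw [e]
  linarith

open Classical in
lemma disc_count (a b : ℝ) (hb : 0 ≤ b) :
    (((brumerBox a b).filter (fun p => 4 * p.1 ^ 3 + 27 * p.2 ^ 2 = 0)).card : ℝ) ≤ 2 * b + 1 := by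
  have h : ((brumerBox a b).filter (fun p => 4 * p.1 ^ 3 + 27 * p.2 ^ 2 = 0)).card
      ≤ (Finset.Icc (-⌊b⌋) ⌊b⌋).card := by
    refine Finset.card_le_card_of_injOn Prod.snd ?_ ?_
    · intro p hp
      have := (Finset.mem_filter.1 hp).1
      exact (Finset.mem_product.1 this).2
    · intro p hp r hr hpr
      have h1 := (Finset.mem_filter.1 hp).2
      have h2 := (Finset.mem_filter.1 hr).2
      refine Prod.ext ?_ hpr
      have hpr' : p.2 = r.2 := hpr
      rw [hpr'] at h1
      exact (Odd.strictMono_pow (by decide : Odd 3)).injective (by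
        show p.1 ^ 3 = r.1 ^ 3
        linarith)
  have h2 : ((Finset.Icc (-⌊b⌋) ⌊b⌋).card : ℝ) = 2 * (⌊b⌋ : ℝ) + 1 := by
    rw [Int.card_Icc]
    have h0 : 0 ≤ ⌊b⌋ := Int.floor_nonneg.2 hb
    have : ((⌊b⌋ + 1 - -⌊b⌋).toNat : ℤ) = 2 * ⌊b⌋ + 1 := by omega
    exact_mod_cast this
  have h3 : (((brumerBox a b).filter (fun p => 4 * p.1 ^ 3 + 27 * p.2 ^ 2 = 0)).card : ℝ)
      ≤ ((Finset.Icc (-⌊b⌋) ⌊b⌋).card : ℝ) := by exact_mod_cast h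
  linarith [Int.floor_le b]

open Classical in
lemma count_compare (X x : ℝ) (hx : 0 ≤ x) (h4 : X ^ ((1 : ℝ)/3) = x ^ 4)
    (h6 : X ^ ((1 : ℝ)/2) = x ^ 6) :
    |(minimalWeierstrassCount X : ℝ) - (((brumerBox (x ^ 4) (x ^ 6)).filter BrumerMin).card : ℝ)|
      ≤ 2 * x ^ 6 + 1 := by
  have e : minimalWeierstrassCount X = (((brumerBox (x ^ 4) (x ^ 6)).filter BrumerMin).filter
      (fun p => ¬ (4 * p.1 ^ 3 + 27 * p.2 ^ 2 = 0))).card := by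
    rw [minimalWeierstrassCount]
    apply Nat.subtype_card
    intro p
    rw [Finset.mem_filter, Finset.mem_filter, mem_brumerBox, h4, h6]
    unfold BrumerMin
    tauto
  have h := Finset.card_filter_add_card_filter_not (s := (brumerBox (x ^ 4) (x ^ 6)).filter BrumerMin)
    (fun p => 4 * p.1 ^ 3 + 27 * p.2 ^ 2 = 0)
  rw [← e] at h
  have hle : (((brumerBox (x ^ 4) (x ^ 6)).filter BrumerMin).filter
      (fun p => 4 * p.1 ^ 3 + 27 * p.2 ^ 2 = 0)).card ≤
      ((brumerBox (x ^ 4) (x ^ 6)).filter (fun p => 4 * p.1 ^ 3 + 27 * p.2 ^ 2 = 0)).card :=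
    Finset.card_le_card (Finset.filter_subset_filter _ (Finset.filter_subset _ _))
  have hd := disc_count (x ^ 4) (x ^ 6) (by positivity)
  have hle' := (Nat.cast_le (α := ℝ)).2 hle
  have h' := congrArg (Nat.cast : ℕ → ℝ) h
  push_cast at h'
  rw [abs_sub_comm, abs_le]
  constructor
  · have : (0 : ℝ) ≤ ((((brumerBox (x ^ 4) (x ^ 6)).filter BrumerMin).filter
      (fun p => 4 * p.1 ^ 3 + 27 * p.2 ^ 2 = 0)).card : ℝ) := Nat.cast_nonneg _
    have : 0 ≤ x ^ 6 := by positivity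
    linarith
  · linarith

/-- **Brumer's lemma.** The number of pairs `(A, B) ∈ ℤ²` with
`|A| ≤ X^{1/3}`, `|B| ≤ X^{1/2}`, `4A³ + 27B² ≠ 0` and, for every prime `q`,
`q⁴ ∣ A → q⁶ ∤ B`, equals `(4/ζ(10)) X^{5/6} + O(X^{1/2})` as `X → ∞`. -/
theorem brumer_count_minimal_weierstrass :
    (fun X : ℝ => (minimalWeierstrassCount X : ℝ) -
        (4 / (∑' n : ℕ, (1 : ℝ) / (n + 1) ^ 10)) * X ^ ((5 : ℝ)/6))
      =O[atTop] fun X : ℝ => X ^ ((1 : ℝ)/2) := by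
  classical
  refine IsBigO.of_bound (6 * (∑' n : ℕ, (1 : ℝ) / (n : ℝ) ^ 6) + 3) ?_
  filter_upwards [eventually_ge_atTop (1 : ℝ)] with X hX
  have hX0 : 0 ≤ X := by linarith
  set x : ℝ := X ^ ((1 : ℝ) / 12) with hxdef
  have hx1 : 1 ≤ x := Real.one_le_rpow hX (by norm_num)
  have hx0 : 0 ≤ x := by linarith
  have h4 : X ^ ((1 : ℝ)/3) = x ^ 4 := by
    rw [hxdef, ← Real.rpow_mul_natCast hX0]; norm_num
  have h6 : X ^ ((1 : ℝ)/2) = x ^ 6 := by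
    rw [hxdef, ← Real.rpow_mul_natCast hX0]; norm_num
  have h10 : X ^ ((5 : ℝ)/6) = x ^ 10 := by
    rw [hxdef, ← Real.rpow_mul_natCast hX0]; norm_num
  have hc := count_compare X x hx0 h4 h6
  have hm := min_count_bound x hx0
  have h1 : 1 ≤ x ^ 6 := one_le_pow₀ hx1
  rw [h6, h10, Real.norm_eq_abs, Real.norm_eq_abs, abs_of_nonneg (by positivity : 0 ≤ x ^ 6)]
  have := abs_sub_le (minimalWeierstrassCount X : ℝ)
    (((brumerBox (x ^ 4) (x ^ 6)).filter BrumerMin).card : ℝ)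
    (4 / (∑' n : ℕ, (1 : ℝ) / (n + 1) ^ 10) * x ^ 10)
  linarith
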